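/- Fix α > 1 and integer d ≥ 3. If X is an α-evenly distributed finite point set in the closed unit ball in ℝ^d, then L(X) = O(|X|^{(d+1)/(2d)}); i.e., there is a constant c depending only on α and d such that L(X) ≤ c·|X|^{(d+1)/(2d)}. -/

import Mathlib

open scoped Classical RealInnerProductSpace
open Metric MeasureTheory

/-- The set of extreme points (convex-layer vertices) of a finite point set. -/
noncomputable def extremePts {d : ℕ} (S : Finset (EuclideanSpace ℝ (Fin d))) :
    Finset (EuclideanSpace ℝ (Fin d)) :=
  S.filter fun x =>
    x ∉ convexHull ℝ ((S.erase x : Finset (EuclideanSpace ℝ (Fin d))) :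
      Set (EuclideanSpace ℝ (Fin d)))

/-- `peel S k` is the set of points remaining after `k` peeling steps, i.e. `X_{k+1}`. -/
noncomputable def peel {d : ℕ} (S : Finset (EuclideanSpace ℝ (Fin d))) :
    ℕ → Finset (EuclideanSpace ℝ (Fin d))
  | 0 => S
  | k + 1 => peel S k \ extremePts (peel S k)

/-- The layer number: the number of peeling steps needed to remove all points. -/
noncomputable def layerNum {d : ℕ} (S : Finset (EuclideanSpace ℝ (Fin d))) : ℕ :=
  sInf {k | peel S k = ∅}

/-!
Even distribution applied to a ball of volume `1 / (α |X|)` makes any two points of `X` more than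
`δ = (α |X| vol B) ^ (-1 / d)` apart. If a `δ`-separated set lies in the ball of squared radius `ρ`
around `z`, then a point `x` at squared distance more than `ρ - δ ^ 2` from `z` is extreme: the
hyperplane through `x` orthogonal to `x - z` strictly separates it from the other points. So every
peeling step lowers the squared radius by `δ ^ 2`, and about `δ ^ (-2)`, that is
`O(|X| ^ (2 / d))`, steps suffice. Finally `2 / d ≤ (d + 1) / (2 d)` exactly when `3 ≤ d`.
-/

section Peeling

-- The condition on `y` says that the angle at `x` in the triangle `z x y` is acute.
theorem notMem_convexHull_of_forall_dist_sq_lt {E : Type*} [NormedAddCommGroup E]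
    [InnerProductSpace ℝ E] {s : Set E} {x z : E}
    (h : ∀ y ∈ s, dist y z ^ 2 < dist x z ^ 2 + dist y x ^ 2) : x ∉ convexHull ℝ s := by
  have hconv : Convex ℝ {y : E | ⟪x - z, y⟫ < ⟪x - z, x⟫} :=
    convex_halfSpace_lt (innerₗ E (x - z)).isLinear _
  have hsub : s ⊆ {y : E | ⟪x - z, y⟫ < ⟪x - z, x⟫} := by
    intro y hy
    have hexpand : ‖y - z‖ ^ 2 = ‖x - z‖ ^ 2 + 2 * ⟪x - z, y - x⟫ + ‖y - x‖ ^ 2 := by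
      rw [← norm_add_sq_real, sub_add_sub_comm, add_comm x y, add_sub_add_right_eq_sub]
    have hacute := h y hy
    rw [dist_eq_norm, dist_eq_norm, dist_eq_norm, hexpand, inner_sub_right] at hacute
    change ⟪x - z, y⟫ < ⟪x - z, x⟫
    linarith
  exact fun hx => lt_irrefl ⟪x - z, x⟫ (convexHull_min hsub hconv hx)

variable {d : ℕ} {S : Finset (EuclideanSpace ℝ (Fin d))} {z : EuclideanSpace ℝ (Fin d)}

theorem mem_extremePts_of_forall_dist_sq_lt {x : EuclideanSpace ℝ (Fin d)} (hx : x ∈ S)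
    (h : ∀ y ∈ S, y ≠ x → dist y z ^ 2 < dist x z ^ 2 + dist y x ^ 2) : x ∈ extremePts S := by
  refine Finset.mem_filter.2 ⟨hx, notMem_convexHull_of_forall_dist_sq_lt (z := z) fun y hy => ?_⟩
  obtain ⟨hyx, hyS⟩ := Finset.mem_erase.1 (Finset.mem_coe.1 hy)
  exact h y hyS hyx

theorem peel_subset (S : Finset (EuclideanSpace ℝ (Fin d))) (k : ℕ) : peel S k ⊆ S := by
  induction k with
  | zero => exact Finset.Subset.refl S
  | succ k ih => exact Finset.sdiff_subset.trans ih

theorem dist_sq_le_of_mem_peel {R δ : ℝ} (hδ : 0 ≤ δ) (hball : (S : Set _) ⊆ closedBall z R)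
    (hsep : (S : Set (EuclideanSpace ℝ (Fin d))).Pairwise fun x y => δ ≤ dist x y) (k : ℕ) :
    ∀ x ∈ peel S k, dist x z ^ 2 ≤ R ^ 2 - k * δ ^ 2 := by
  induction k with
  | zero =>
    intro x hx
    simpa using pow_le_pow_left₀ dist_nonneg (mem_closedBall.1 (hball hx)) 2
  | succ k ih =>
    intro x hx
    obtain ⟨hxk, hx_not_extreme⟩ := Finset.mem_sdiff.1 hx
    by_contra! hfar
    refine hx_not_extreme (mem_extremePts_of_forall_dist_sq_lt (z := z) hxk fun y hyk hyx => ?_)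
    have hyx_sep : δ ^ 2 ≤ dist y x ^ 2 :=
      pow_le_pow_left₀ hδ (hsep (peel_subset S k hyk) (peel_subset S k hxk) hyx) 2
    have hyz := ih y hyk
    push_cast at hfar
    linarith

@[simp]
theorem layerNum_empty : layerNum (∅ : Finset (EuclideanSpace ℝ (Fin d))) = 0 :=
  Nat.le_zero.1 (Nat.sInf_le rfl)

theorem layerNum_le_of_pairwise_le_dist {R δ : ℝ} (hδ : 0 < δ)
    (hball : (S : Set _) ⊆ closedBall z R)
    (hsep : (S : Set (EuclideanSpace ℝ (Fin d))).Pairwise fun x y => δ ≤ dist x y) :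
    layerNum S ≤ ⌊R ^ 2 / δ ^ 2⌋₊ + 1 := by
  refine Nat.sInf_le (Finset.eq_empty_of_forall_notMem fun x hx => ?_)
  have hdist := dist_sq_le_of_mem_peel hδ.le hball hsep _ x hx
  have hsteps : R ^ 2 < (⌊R ^ 2 / δ ^ 2⌋₊ + 1 : ℕ) * δ ^ 2 := by
    rw [← div_lt_iff₀ (by positivity), Nat.cast_add_one]
    exact Nat.lt_floor_add_one (R ^ 2 / δ ^ 2)
  linarith [sq_nonneg (dist x z)]

end Peeling

theorem mul_card_mul_measureReal_unitBall_pos {E : Type*} [SeminormedAddCommGroup E] [ProperSpace E]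
    [MeasureSpace E] [(volume : Measure E).IsOpenPosMeasure]
    [IsFiniteMeasureOnCompacts (volume : Measure E)] {α : ℝ} (hα : 0 < α) {X : Finset E}
    (hne : X.Nonempty) : 0 < α * X.card * volume.real (ball (0 : E) 1) :=
  mul_pos (mul_pos hα (Nat.cast_pos.2 hne.card_pos))
    (ENNReal.toReal_pos (measure_ball_pos _ _ one_pos).ne' measure_ball_lt_top.ne)

/-- `X` is `α`-evenly distributed: no ball contains more points of `X` than its volume allows.
Balls of positive volume are encoded as closed balls of positive radius. -/
def IsEvenlyDistributed {E : Type*} [PseudoMetricSpace E] [MeasureSpace E] (α : ℝ)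
    (X : Finset E) : Prop :=
  ∀ (z : E) (r : ℝ), 0 < r → ((X.filter fun x => x ∈ closedBall z r).card : ℤ)
    ≤ ⌈α * X.card * (volume (closedBall z r)).toReal⌉

namespace IsEvenlyDistributed

theorem lt_dist {E : Type*} [PseudoMetricSpace E] [MeasureSpace E] {α : ℝ} {X : Finset E}
    (hX : IsEvenlyDistributed α X) {x y : E} (hx : x ∈ X) (hy : y ∈ X) (hxy : x ≠ y) {r : ℝ}
    (hr : 0 < r) (hvol : α * X.card * volume.real (closedBall x r) ≤ 1) : r < dist x y := by
  by_contra! hclose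
  have hpair : {x, y} ⊆ X.filter fun w => w ∈ closedBall x r := by
    simp only [Finset.insert_subset_iff, Finset.singleton_subset_iff, Finset.mem_filter]
    exact ⟨⟨hx, mem_closedBall_self hr.le⟩, hy, mem_closedBall'.2 hclose⟩
  have htwo : 2 ≤ (X.filter fun w => w ∈ closedBall x r).card :=
    Finset.card_pair hxy ▸ Finset.card_le_card hpair
  have hone : ((X.filter fun w => w ∈ closedBall x r).card : ℤ) ≤ 1 :=
    (hX x r hr).trans (Int.ceil_le.2 (by exact_mod_cast hvol))
  omega

theorem pairwise_lt_dist {E : Type*} [NormedAddCommGroup E] [NormedSpace ℝ E]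
    [FiniteDimensional ℝ E] [Nontrivial E] [MeasureSpace E] [BorelSpace E]
    [(volume : Measure E).IsAddHaarMeasure] {α : ℝ} (hα : 0 < α) {X : Finset E}
    (hX : IsEvenlyDistributed α X) :
    (X : Set E).Pairwise fun x y =>
      (α * X.card * volume.real (ball (0 : E) 1)) ^ (-(Module.finrank ℝ E : ℝ)⁻¹) < dist x y := by
  intro x hx y hy hxy
  set A : ℝ := α * X.card * volume.real (ball (0 : E) 1) with hA
  have hApos : 0 < A := mul_card_mul_measureReal_unitBall_pos hα ⟨x, hx⟩
  set r : ℝ := A ^ (-(Module.finrank ℝ E : ℝ)⁻¹)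
  have hr : 0 < r := Real.rpow_pos_of_pos hApos _
  have hr_pow : r ^ Module.finrank ℝ E = A⁻¹ := by
    rw [show r = (A ^ (Module.finrank ℝ E : ℝ)⁻¹)⁻¹ from Real.rpow_neg hApos.le _, inv_pow,
      Real.rpow_inv_natCast_pow hApos.le Module.finrank_pos.ne']
  refine hX.lt_dist hx hy hxy hr (le_of_eq ?_)
  calc α * X.card * volume.real (closedBall x r)
      = A * r ^ Module.finrank ℝ E := by rw [Measure.addHaar_real_closedBall _ _ hr.le, hA]; ring
    _ = 1 := by rw [hr_pow, mul_inv_cancel₀ hApos.ne']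

theorem layerNum_le {d : ℕ} [NeZero d] {α R : ℝ} (hα : 0 < α)
    {X : Finset (EuclideanSpace ℝ (Fin d))} (hX : IsEvenlyDistributed α X)
    {z : EuclideanSpace ℝ (Fin d)} (hball : (X : Set _) ⊆ closedBall z R) (hne : X.Nonempty) :
    (layerNum X : ℝ) ≤ R ^ 2 * (α * X.card *
      volume.real (ball (0 : EuclideanSpace ℝ (Fin d)) 1)) ^ (2 / (d : ℝ)) + 1 := by
  have hsep := hX.pairwise_lt_dist hα
  rw [finrank_euclideanSpace_fin] at hsep
  set A : ℝ := α * X.card * volume.real (ball (0 : EuclideanSpace ℝ (Fin d)) 1)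
  have hApos : 0 < A := mul_card_mul_measureReal_unitBall_pos hα hne
  have hlayers := layerNum_le_of_pairwise_le_dist (Real.rpow_pos_of_pos hApos _) hball
    (hsep.mono' fun _ _ => le_of_lt)
  have hδ : ((A ^ (-(d : ℝ)⁻¹)) ^ 2)⁻¹ = A ^ (2 / (d : ℝ)) := by
    rw [Real.rpow_neg hApos.le, inv_pow, inv_inv, ← Real.rpow_mul_natCast hApos.le]
    congr 1
    push_cast
    ring
  calc (layerNum X : ℝ) ≤ ⌊R ^ 2 / (A ^ (-(d : ℝ)⁻¹)) ^ 2⌋₊ + 1 := by exact_mod_cast hlayers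
    _ ≤ R ^ 2 / (A ^ (-(d : ℝ)⁻¹)) ^ 2 + 1 := by gcongr; exact Nat.floor_le (by positivity)
    _ = R ^ 2 * A ^ (2 / (d : ℝ)) + 1 := by rw [div_eq_mul_inv, hδ]

end IsEvenlyDistributed

theorem natCast_rpow_le_rpow_of_exponent_le (n : ℕ) {a b : ℝ} (ha : 0 < a) (hab : a ≤ b) :
    (n : ℝ) ^ a ≤ (n : ℝ) ^ b := by
  rcases n.eq_zero_or_pos with rfl | hn
  · rw [Nat.cast_zero, Real.zero_rpow ha.ne', Real.zero_rpow (ha.trans_le hab).ne']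
  · exact Real.rpow_le_rpow_of_exponent_le (by exact_mod_cast hn) hab

theorem two_div_le_add_one_div_two_mul {x : ℝ} (hx : 3 ≤ x) : 2 / x ≤ (x + 1) / (2 * x) := by
  rw [div_le_div_iff₀ (by positivity) (by positivity)]
  nlinarith

theorem layerNum_evenly_distributed_highdim_general (α : ℝ) (hα : 0 < α) (d : ℕ) [NeZero d]
    (R : ℝ) :
    ∃ c : ℝ, 0 < c ∧ ∀ (X : Finset (EuclideanSpace ℝ (Fin d))) (z : EuclideanSpace ℝ (Fin d)),
      (X : Set _) ⊆ closedBall z R → IsEvenlyDistributed α X →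
      (layerNum X : ℝ) ≤ c * (X.card : ℝ) ^ (2 / (d : ℝ)) := by
  set v : ℝ := volume.real (ball (0 : EuclideanSpace ℝ (Fin d)) 1)
  refine ⟨R ^ 2 * (α * v) ^ (2 / (d : ℝ)) + 1, by positivity, fun X z hball hX => ?_⟩
  rcases X.eq_empty_or_nonempty with rfl | hne
  · rw [layerNum_empty, Nat.cast_zero]
    positivity
  have hcard : (1 : ℝ) ≤ X.card := by exact_mod_cast hne.card_pos
  calc (layerNum X : ℝ) ≤ R ^ 2 * (α * X.card * v) ^ (2 / (d : ℝ)) + 1 :=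
        hX.layerNum_le hα hball hne
    _ = R ^ 2 * (α * v) ^ (2 / (d : ℝ)) * (X.card : ℝ) ^ (2 / (d : ℝ)) + 1 := by
        rw [mul_right_comm, Real.mul_rpow (by positivity) (by positivity), mul_assoc]
    _ ≤ R ^ 2 * (α * v) ^ (2 / (d : ℝ)) * (X.card : ℝ) ^ (2 / (d : ℝ))
        + (X.card : ℝ) ^ (2 / (d : ℝ)) := by
        gcongr
        exact Real.one_le_rpow hcard (by positivity)
    _ = (R ^ 2 * (α * v) ^ (2 / (d : ℝ)) + 1) * (X.card : ℝ) ^ (2 / (d : ℝ)) := by ring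

theorem layerNum_evenly_distributed_highdim (α : ℝ) (hα : 1 < α) (d : ℕ) (hd : 3 ≤ d) :
    ∃ c : ℝ, 0 < c ∧ ∀ X : Finset (EuclideanSpace ℝ (Fin d)),
      (∀ x ∈ X, x ∈ closedBall (0 : EuclideanSpace ℝ (Fin d)) 1) →
      (∀ (z : EuclideanSpace ℝ (Fin d)) (r : ℝ), 0 < r →
        ((X.filter fun x => x ∈ closedBall z r).card : ℤ)
          ≤ ⌈α * X.card * (volume (closedBall z r)).toReal⌉) →
      (layerNum X : ℝ) ≤ c * (X.card : ℝ) ^ (((d : ℝ) + 1) / (2 * d)) := by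
  have : NeZero d := ⟨by omega⟩
  have hexp : 2 / (d : ℝ) ≤ (d + 1) / (2 * d) :=
    two_div_le_add_one_div_two_mul (by exact_mod_cast hd)
  obtain ⟨c, hc, hbound⟩ :=
    layerNum_evenly_distributed_highdim_general α (one_pos.trans hα) d 1
  refine ⟨c, hc, fun X hball hX => (hbound X 0 hball hX).trans ?_⟩
  gcongr c * ?_
  exact natCast_rpow_le_rpow_of_exponent_le X.card (by positivity) hexp
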